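/- Let a signed digraph be structurally unbalanced and contain a directed spanning tree. Then rank(L_s) = rank(L_{e_s}) if and only if the digraph contains a SUB-rooted SCC or a root node. Moreover, in that case the common rank is N if the digraph contains a SUB-rooted SCC, and N − 1 if the digraph contains a root node. -/

import Mathlib

open Matrix

/-- The signed incidence matrix of a signed digraph. -/
def Es {N M : ℕ} (head tail : Fin M → Fin N) (σ : Fin M → ℝ) : Matrix (Fin N) (Fin M) ℝ :=
  Matrix.of fun i k => if i = head k then 1 else if i = tail k then -σ k else 0

/-- The signed in-incidence matrix of a signed digraph. -/
def Ein {N M : ℕ} (head tail : Fin M → Fin N) (σ : Fin M → ℝ) : Matrix (Fin N) (Fin M) ℝ :=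
  Matrix.of fun i k => if i = tail k then -σ k else 0

/-- The signed Laplacian `L_s = E_{s⊙} E_sᵀ`. -/
def Ls {N M : ℕ} (head tail : Fin M → Fin N) (σ : Fin M → ℝ) : Matrix (Fin N) (Fin N) ℝ :=
  Ein head tail σ * (Es head tail σ)ᵀ

/-- The signed edge Laplacian `L_{e_s} = E_sᵀ E_{s⊙}`. -/
def Les {N M : ℕ} (head tail : Fin M → Fin N) (σ : Fin M → ℝ) : Matrix (Fin M) (Fin M) ℝ :=
  (Es head tail σ)ᵀ * Ein head tail σ

/-- Node `b` is reachable from node `a`. -/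
def Reaches {N M : ℕ} (head tail : Fin M → Fin N) : Fin N → Fin N → Prop :=
  Relation.ReflTransGen fun a b => ∃ k, head k = a ∧ tail k = b

/-- The digraph contains a directed spanning tree. -/
def HasSpanningTree {N M : ℕ} (head tail : Fin M → Fin N) : Prop :=
  ∃ r, ∀ b, Reaches head tail r b

/-- A root node: a node that is the tail of no edge. -/
def IsRootNode {N M : ℕ} (tail : Fin M → Fin N) (i : Fin N) : Prop :=
  ∀ k, tail k ≠ i

/-- Structural balance of a signed digraph. -/
def StructBalanced {N M : ℕ} (head tail : Fin M → Fin N) (σ : Fin M → ℝ) : Prop :=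
  ∃ d : Fin N → ℝ, (∀ i, d i = 1 ∨ d i = -1) ∧ ∀ k, d (head k) * d (tail k) = σ k

/-- A rooted strongly connected component. -/
def IsRootedSCC {N M : ℕ} (head tail : Fin M → Fin N) (S : Finset (Fin N)) : Prop :=
  2 ≤ S.card ∧ (∀ k, tail k ∈ S → head k ∈ S) ∧
    ∀ a ∈ S, ∀ b ∈ S, Reaches head tail a b

/-- Structural balance of a rooted SCC. -/
def SCCBalanced {N M : ℕ} (head tail : Fin M → Fin N) (σ : Fin M → ℝ)
    (S : Finset (Fin N)) : Prop :=
  ∃ d : Fin N → ℝ, (∀ i ∈ S, d i = 1 ∨ d i = -1) ∧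
    ∀ k, head k ∈ S → tail k ∈ S → d (head k) * d (tail k) = σ k

/-!
Both ranks are compared with the rank of `E_{s⊙}`, which is `N` exactly when there is no root node.
Unbalance and the spanning tree make `E_sᵀ` injective, so `rank L_{e_s} = rank E_{s⊙}`, while
`rank L_s ≤ rank E_{s⊙}` always.

A maximum principle controls `ker L_s`: at a node where `|x|` is maximal, the equation `L_s x = 0`
forces `x (head k) = σ k * x (tail k)` on every incoming edge. Maximality therefore propagates
backwards to the root `r` of the spanning tree, so a kernel vector is determined by `x r`, and
`rank L_s ≥ N - 1`. A kernel vector with `x r ≠ 0` balances the strongly connected component of `r`.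
Conversely, `L_s` maps a balancing of that component to a vector vanishing on the component; as it
also preserves the space of such vectors, it is not injective. Hence `rank L_s = N` exactly when
there is an unbalanced rooted component.
-/

section LinearAlgebra

variable {K : Type*} [Field K]

theorem mem_of_map_mem_of_injective {V : Type*} [AddCommGroup V] [Module K V]
    {P : Submodule K V} [FiniteDimensional K P] {f : V →ₗ[K] V} (hf : Function.Injective f)
    (hP : ∀ x ∈ P, f x ∈ P) {v : V} (hv : f v ∈ P) : v ∈ P := by
  have hsurj : Function.Surjective (f.restrict hP) :=
    LinearMap.injective_iff_surjective.1 fun x y hxy =>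
      Subtype.ext (hf (congrArg Subtype.val hxy))
  obtain ⟨p, hp⟩ := hsurj ⟨f v, hv⟩
  have hpv : (p : V) = v := hf (congrArg Subtype.val hp)
  exact hpv ▸ p.2

variable {l m n : Type*} [Fintype n]

theorem rank_eq_card_iff_ker_mulVecLin_eq_bot (A : Matrix m n K) :
    A.rank = Fintype.card n ↔ LinearMap.ker A.mulVecLin = ⊥ := by
  rw [LinearMap.ker_eq_bot, Matrix.coe_mulVecLin, Matrix.mulVec_injective_iff,
    linearIndependent_iff_card_eq_finrank_span, Matrix.rank_eq_finrank_span_cols, eq_comm,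
    Set.finrank]

theorem card_le_rank_add_one (A : Matrix m n K) (i : n)
    (h : ∀ x, A *ᵥ x = 0 → x i = 0 → x = 0) : Fintype.card n ≤ A.rank + 1 := by
  let coord : LinearMap.ker A.mulVecLin →ₗ[K] K :=
    LinearMap.proj i ∘ₗ (LinearMap.ker A.mulVecLin).subtype
  have hcoord : Function.Injective coord :=
    (injective_iff_map_eq_zero coord).2 fun x hx => Subtype.ext (h x x.2 hx)
  calc Fintype.card n
      = A.rank + Module.finrank K (LinearMap.ker A.mulVecLin) := by
        rw [Matrix.rank, LinearMap.finrank_range_add_finrank_ker, Module.finrank_pi]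
    _ ≤ A.rank + Module.finrank K K := by
        gcongr
        exact LinearMap.finrank_le_finrank_of_injective hcoord
    _ = A.rank + 1 := by rw [Module.finrank_self]

theorem rank_mul_eq_right_of_ker_mulVecLin_eq_bot [Fintype m] {A : Matrix l m K}
    (hA : LinearMap.ker A.mulVecLin = ⊥) (B : Matrix m n K) : (A * B).rank = B.rank := by
  rw [Matrix.rank, Matrix.mulVecLin_mul, LinearMap.range_comp]
  exact (Submodule.equivMapOfInjective _ (LinearMap.ker_eq_bot.1 hA) _).finrank_eq.symm

end LinearAlgebra

section SignedDigraph

variable {N M : ℕ} {head tail : Fin M → Fin N} {σ : Fin M → ℝ}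

theorem Reaches.backward_induction {p : Fin N → Prop} (hp : ∀ k, p (tail k) → p (head k))
    {a b : Fin N} (hab : Reaches head tail a b) (hb : p b) : p a := by
  induction hab using Relation.ReflTransGen.head_induction_on with
  | refl => exact hb
  | head hedge _ ih =>
    obtain ⟨k, rfl, rfl⟩ := hedge
    exact hp k ih

theorem IsRootedSCC.mem_of_forall_reaches {S : Finset (Fin N)} (hS : IsRootedSCC head tail S)
    {r : Fin N} (hr : ∀ b, Reaches head tail r b) : r ∈ S := by
  obtain ⟨a, ha⟩ : S.Nonempty := Finset.card_pos.1 (by have := hS.1; omega)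
  exact (hr a).backward_induction (p := (· ∈ S)) hS.2.1 ha

theorem exists_isRootedSCC (hht : ∀ k, head k ≠ tail k) {r : Fin N}
    (hr : ∀ b, Reaches head tail r b) (hroot : ¬ IsRootNode tail r) :
    ∃ S, IsRootedSCC head tail S := by
  classical
  let S : Finset (Fin N) := {a | Reaches head tail a r}
  have mem_S {a : Fin N} : a ∈ S ↔ Reaches head tail a r := by simp [S]
  have hclosed (k : Fin M) (hk : tail k ∈ S) : head k ∈ S :=
    mem_S.2 (.head ⟨k, rfl, rfl⟩ (mem_S.1 hk))
  obtain ⟨k, hk⟩ : ∃ k, tail k = r := by simpa [IsRootNode] using hroot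
  have htail : tail k ∈ S := mem_S.2 (hk ▸ .refl)
  exact ⟨S, Finset.one_lt_card.2 ⟨head k, hclosed k htail, tail k, htail, hht k⟩, hclosed,
    fun a ha b _ => (mem_S.1 ha).trans (hr b)⟩

theorem sccBalanced_univ_iff :
    SCCBalanced head tail σ Finset.univ ↔ StructBalanced head tail σ := by
  simp [SCCBalanced, StructBalanced]

theorem sccBalanced_of_abs_eq {S : Finset (Fin N)} {x : Fin N → ℝ} {c : ℝ} (hc : c ≠ 0)
    (habs : ∀ i ∈ S, |x i| = c)
    (hedge : ∀ k, head k ∈ S → tail k ∈ S → x (head k) = σ k * x (tail k)) :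
    SCCBalanced head tail σ S := by
  refine ⟨fun i => x i / c, fun i hi => ?_, fun k hhead htail => ?_⟩
  · rw [div_eq_one_iff_eq hc, div_eq_iff hc, neg_one_mul]
    exact eq_or_eq_neg_of_abs_eq (habs i hi)
  · have hsq : x (tail k) ^ 2 = c ^ 2 := by rw [← sq_abs, habs _ htail]
    simp only [hedge k hhead htail]
    field_simp
    rw [hsq]

theorem abs_mul_eq_of_sign {s : ℝ} (hs : s = 1 ∨ s = -1) (y : ℝ) : |s * y| = |y| := by
  rcases hs with rfl | rfl <;> simp

theorem ne_zero_of_sign {s : ℝ} (hs : s = 1 ∨ s = -1) : s ≠ 0 := by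
  rcases hs with rfl | rfl <;> simp

theorem Ein_transpose_mulVec_apply (x : Fin N → ℝ) (k : Fin M) :
    ((Ein head tail σ)ᵀ *ᵥ x) k = -σ k * x (tail k) := by
  simp [Matrix.mulVec, dotProduct, Ein]

theorem rank_Ein_eq_iff (hσ : ∀ k, σ k ≠ 0) :
    (Ein head tail σ).rank = N ↔ ¬ ∃ i, IsRootNode tail i := by
  have hker (x : Fin N → ℝ) : (Ein head tail σ)ᵀ *ᵥ x = 0 ↔ ∀ k, x (tail k) = 0 := by
    simp [funext_iff, Ein_transpose_mulVec_apply, hσ]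
  have hcard := rank_eq_card_iff_ker_mulVecLin_eq_bot (Ein head tail σ)ᵀ
  rw [Matrix.rank_transpose, Fintype.card_fin, Matrix.ker_mulVecLin_eq_bot_iff] at hcard
  simp only [hcard, hker, IsRootNode, not_exists, not_forall, not_not]
  constructor
  · intro hinj i
    by_contra! hi
    have hsingle := hinj (Pi.single i 1) fun k => Pi.single_eq_of_ne (hi k) 1
    exact one_ne_zero (Pi.single_eq_zero_iff.1 hsingle)
  · intro hsurj x hx
    funext i
    obtain ⟨k, rfl⟩ := hsurj i
    exact hx k

theorem Es_transpose_mulVec_apply (hht : ∀ k, head k ≠ tail k) (x : Fin N → ℝ) (k : Fin M) :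
    ((Es head tail σ)ᵀ *ᵥ x) k = x (head k) - σ k * x (tail k) := by
  have hcol (i : Fin N) : Es head tail σ i k * x i =
      (if i = head k then x i else 0) - (if i = tail k then σ k * x i else 0) := by
    have := hht k
    simp only [Es, Matrix.of_apply]
    grind
  simp [Matrix.mulVec, dotProduct, hcol, Finset.sum_sub_distrib]

theorem ker_mulVecLin_Es_transpose_eq_bot (hht : ∀ k, head k ≠ tail k)
    (hσ : ∀ k, σ k = 1 ∨ σ k = -1) (hSUB : ¬ StructBalanced head tail σ)
    (htree : HasSpanningTree head tail) :
    LinearMap.ker (Es head tail σ)ᵀ.mulVecLin = ⊥ := by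
  obtain ⟨r, hr⟩ := htree
  refine Matrix.ker_mulVecLin_eq_bot_iff.2 fun x hx => ?_
  have hedge (k : Fin M) : x (head k) = σ k * x (tail k) := by
    rw [← sub_eq_zero, ← Es_transpose_mulVec_apply hht, hx, Pi.zero_apply]
  have habs (b : Fin N) : |x b| = |x r| :=
    ((hr b).backward_induction (p := fun i => |x i| = |x b|)
      (fun k hk => by rw [hedge, abs_mul_eq_of_sign (hσ k), hk]) rfl).symm
  have hxr : |x r| = 0 := by
    by_contra hxr
    exact hSUB (sccBalanced_univ_iff.1
      (sccBalanced_of_abs_eq hxr (fun b _ => habs b) fun k _ _ => hedge k))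
  funext b
  exact abs_eq_zero.1 ((habs b).trans hxr)

theorem Ls_mulVec_apply (hht : ∀ k, head k ≠ tail k) (x : Fin N → ℝ) (i : Fin N) :
    (Ls head tail σ *ᵥ x) i =
      ∑ k with tail k = i, -σ k * (x (head k) - σ k * x (tail k)) := by
  rw [Ls, ← Matrix.mulVec_mulVec, Finset.sum_filter]
  rw [Matrix.mulVec, dotProduct]
  refine Finset.sum_congr rfl fun k _ => ?_
  simp only [Es_transpose_mulVec_apply hht, Ein, Matrix.of_apply, ite_mul, zero_mul, eq_comm]

theorem Ls_mulVec_apply_eq_zero (hht : ∀ k, head k ≠ tail k) {x : Fin N → ℝ} {i : Fin N}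
    (hedge : ∀ k, tail k = i → x (head k) = σ k * x (tail k)) :
    (Ls head tail σ *ᵥ x) i = 0 := by
  rw [Ls_mulVec_apply hht]
  refine Finset.sum_eq_zero fun k hk => ?_
  rw [hedge k (Finset.mem_filter.1 hk).2, sub_self, mul_zero]

theorem eq_mul_of_Ls_mulVec_apply_eq_zero (hht : ∀ k, head k ≠ tail k)
    (hσ : ∀ k, σ k = 1 ∨ σ k = -1) {x : Fin N → ℝ} {k : Fin M}
    (hx : (Ls head tail σ *ᵥ x) (tail k) = 0) (hmax : ∀ j, |x j| ≤ |x (tail k)|) :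
    x (head k) = σ k * x (tail k) := by
  -- After scaling by `2 x (tail k)`, each summand dominates a square because `|x (head l)|` is at
  -- most `|x (tail k)|`, so a vanishing sum forces every square to vanish.
  have hsq (l : Fin M) (hl : tail l = tail k) : (x (head l) - σ l * x (tail l)) ^ 2 ≤
      2 * x (tail k) * (-σ l * (x (head l) - σ l * x (tail l))) := by
    have hle : x (head l) ^ 2 ≤ x (tail k) ^ 2 := sq_le_sq.2 (hmax (head l))
    rw [hl]
    rcases hσ l with h | h <;> rw [h] <;> linarith
  have hsum : ∑ l with tail l = tail k, (x (head l) - σ l * x (tail l)) ^ 2 ≤ 0 := by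
    calc ∑ l with tail l = tail k, (x (head l) - σ l * x (tail l)) ^ 2
        ≤ ∑ l with tail l = tail k,
            2 * x (tail k) * (-σ l * (x (head l) - σ l * x (tail l))) :=
          Finset.sum_le_sum fun l hl => hsq l (Finset.mem_filter.1 hl).2
      _ = 0 := by rw [← Finset.mul_sum, ← Ls_mulVec_apply hht, hx, mul_zero]
  have hterm : (x (head k) - σ k * x (tail k)) ^ 2 ≤ 0 :=
    (Finset.single_le_sum (f := fun l => (x (head l) - σ l * x (tail l)) ^ 2)
      (fun l _ => sq_nonneg _) (by simp)).trans hsum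
  exact sub_eq_zero.1 (sq_nonpos_iff _ |>.1 hterm)

theorem abs_eq_of_reaches (hht : ∀ k, head k ≠ tail k) (hσ : ∀ k, σ k = 1 ∨ σ k = -1)
    {x : Fin N → ℝ} (hx : Ls head tail σ *ᵥ x = 0) {a b : Fin N}
    (hmax : ∀ j, |x j| ≤ |x b|) (hab : Reaches head tail a b) : |x a| = |x b| := by
  refine hab.backward_induction (p := fun i => |x i| = |x b|) (fun k hk => ?_) rfl
  rw [eq_mul_of_Ls_mulVec_apply_eq_zero hht hσ (congrFun hx _) (hk ▸ hmax),
    abs_mul_eq_of_sign (hσ k), hk]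

theorem abs_le_abs_of_forall_reaches (hht : ∀ k, head k ≠ tail k)
    (hσ : ∀ k, σ k = 1 ∨ σ k = -1) {r : Fin N} (hr : ∀ b, Reaches head tail r b)
    {x : Fin N → ℝ} (hx : Ls head tail σ *ᵥ x = 0) (j : Fin N) : |x j| ≤ |x r| := by
  have : Nonempty (Fin N) := ⟨r⟩
  obtain ⟨i, hi⟩ := Finite.exists_max fun j => |x j|
  exact (hi j).trans_eq (abs_eq_of_reaches hht hσ hx hi (hr i)).symm

theorem le_rank_Ls_add_one (hht : ∀ k, head k ≠ tail k) (hσ : ∀ k, σ k = 1 ∨ σ k = -1)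
    (htree : HasSpanningTree head tail) : N ≤ (Ls head tail σ).rank + 1 := by
  obtain ⟨r, hr⟩ := htree
  have hcard := card_le_rank_add_one (Ls head tail σ) r fun x hx hxr => funext fun j => by
    simpa [hxr] using abs_le_abs_of_forall_reaches hht hσ hr hx j
  rwa [Fintype.card_fin] at hcard

theorem ker_mulVecLin_Ls_eq_bot (hht : ∀ k, head k ≠ tail k) (hσ : ∀ k, σ k = 1 ∨ σ k = -1)
    (htree : HasSpanningTree head tail) {S : Finset (Fin N)} (hS : IsRootedSCC head tail S)
    (hSUB : ¬ SCCBalanced head tail σ S) : LinearMap.ker (Ls head tail σ).mulVecLin = ⊥ := by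
  obtain ⟨r, hr⟩ := htree
  refine Matrix.ker_mulVecLin_eq_bot_iff.2 fun x hx => ?_
  have hmax := abs_le_abs_of_forall_reaches hht hσ hr hx
  have habs (i : Fin N) (hi : i ∈ S) : |x i| = |x r| :=
    abs_eq_of_reaches hht hσ hx hmax (hS.2.2 i hi r (hS.mem_of_forall_reaches hr))
  have hxr : |x r| = 0 := by
    by_contra hxr
    exact hSUB (sccBalanced_of_abs_eq hxr habs fun k _ hk =>
      eq_mul_of_Ls_mulVec_apply_eq_zero hht hσ (congrFun hx _) (habs _ hk ▸ hmax))
  funext j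
  exact abs_nonpos_iff.1 (hxr ▸ hmax j)

theorem ker_mulVecLin_Ls_ne_bot (hht : ∀ k, head k ≠ tail k) {S : Finset (Fin N)}
    (hne : S.Nonempty) (hclosed : ∀ k, tail k ∈ S → head k ∈ S)
    (hSB : SCCBalanced head tail σ S) : LinearMap.ker (Ls head tail σ).mulVecLin ≠ ⊥ := by
  obtain ⟨d, hd, hdσ⟩ := hSB
  let P : Submodule ℝ (Fin N → ℝ) := Submodule.pi S fun _ => ⊥
  have hP (x : Fin N → ℝ) (hx : x ∈ P) : (Ls head tail σ).mulVecLin x ∈ P := by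
    simp only [P, Submodule.mem_pi, Submodule.mem_bot] at hx ⊢
    intro i hi
    refine Ls_mulVec_apply_eq_zero hht fun k hk => ?_
    subst hk
    rw [hx _ hi, hx _ (hclosed k hi), mul_zero]
  have hLd : (Ls head tail σ).mulVecLin d ∈ P := by
    simp only [P, Submodule.mem_pi, Submodule.mem_bot]
    intro i hi
    refine Ls_mulVec_apply_eq_zero hht fun k hk => ?_
    subst hk
    rw [← hdσ k (hclosed k hi) hi, mul_assoc]
    rcases hd _ hi with h | h <;> simp [h]
  intro hker
  have hdP : d ∈ P := mem_of_map_mem_of_injective (LinearMap.ker_eq_bot.1 hker) hP hLd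
  obtain ⟨i, hi⟩ := hne
  have hdi : d i = 0 := hdP i hi
  rcases hd i hi with h | h <;> simp [h] at hdi

theorem rank_Ls_le_rank_Ein : (Ls head tail σ).rank ≤ (Ein head tail σ).rank :=
  Matrix.rank_mul_le_left _ _

theorem rank_Les_eq_rank_Ein (hht : ∀ k, head k ≠ tail k) (hσ : ∀ k, σ k = 1 ∨ σ k = -1)
    (hSUB : ¬ StructBalanced head tail σ) (htree : HasSpanningTree head tail) :
    (Les head tail σ).rank = (Ein head tail σ).rank :=
  rank_mul_eq_right_of_ker_mulVecLin_eq_bot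
    (ker_mulVecLin_Es_transpose_eq_bot hht hσ hSUB htree) _

theorem rank_Ls_eq_iff (hht : ∀ k, head k ≠ tail k) (hσ : ∀ k, σ k = 1 ∨ σ k = -1)
    (htree : HasSpanningTree head tail) :
    (Ls head tail σ).rank = N ↔
      ∃ S, IsRootedSCC head tail S ∧ ¬ SCCBalanced head tail σ S := by
  have hfull := rank_eq_card_iff_ker_mulVecLin_eq_bot (Ls head tail σ)
  rw [Fintype.card_fin] at hfull
  constructor
  · intro hrank
    obtain ⟨r, hr⟩ := htree
    have hEin : (Ein head tail σ).rank = N :=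
      (Matrix.rank_le_height _).antisymm (hrank.symm.le.trans rank_Ls_le_rank_Ein)
    have hroot : ¬ IsRootNode tail r := fun h =>
      (rank_Ein_eq_iff fun k => ne_zero_of_sign (hσ k)).1 hEin ⟨r, h⟩
    obtain ⟨S, hS⟩ := exists_isRootedSCC hht hr hroot
    exact ⟨S, hS, fun hSB =>
      ker_mulVecLin_Ls_ne_bot hht ⟨r, hS.mem_of_forall_reaches hr⟩ hS.2.1 hSB (hfull.1 hrank)⟩
  · rintro ⟨S, hS, hSUB⟩
    exact hfull.2 (ker_mulVecLin_Ls_eq_bot hht hσ htree hS hSUB)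

end SignedDigraph

theorem rank_laplacians_SUB_spanning_tree_general {N M : ℕ}
    {head tail : Fin M → Fin N} {σ : Fin M → ℝ}
    (hht : ∀ k, head k ≠ tail k)
    (hσ : ∀ k, σ k = 1 ∨ σ k = -1)
    (hSUB : ¬ StructBalanced head tail σ)
    (htree : HasSpanningTree head tail) :
    ((Ls head tail σ).rank = (Les head tail σ).rank ↔
      ((∃ S, IsRootedSCC head tail S ∧ ¬ SCCBalanced head tail σ S) ∨
        ∃ i, IsRootNode tail i)) ∧
    ((∃ S, IsRootedSCC head tail S ∧ ¬ SCCBalanced head tail σ S) →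
      (Ls head tail σ).rank = N ∧ (Les head tail σ).rank = N) ∧
    ((∃ i, IsRootNode tail i) →
      (Ls head tail σ).rank = N - 1 ∧ (Les head tail σ).rank = N - 1) := by
  have hEin_le : (Ein head tail σ).rank ≤ N := Matrix.rank_le_height _
  have hLs_le : (Ls head tail σ).rank ≤ (Ein head tail σ).rank := rank_Ls_le_rank_Ein
  have hLs_ge : N ≤ (Ls head tail σ).rank + 1 := le_rank_Ls_add_one hht hσ htree
  have hroot : (∃ i, IsRootNode tail i) ↔ (Ein head tail σ).rank ≠ N := by
    rw [Ne, rank_Ein_eq_iff fun k => ne_zero_of_sign (hσ k), not_not]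
  rw [rank_Les_eq_rank_Ein hht hσ hSUB htree, ← rank_Ls_eq_iff hht hσ htree, hroot]
  omega

theorem rank_laplacians_SUB_spanning_tree {N M : ℕ}
    (head tail : Fin M → Fin N) (σ : Fin M → ℝ)
    (hht : ∀ k, head k ≠ tail k)
    (hinj : ∀ k k', head k = head k' → tail k = tail k' → k = k')
    (hσ : ∀ k, σ k = 1 ∨ σ k = -1)
    (hdss : ∀ k k', head k = tail k' → tail k = head k' → σ k = σ k')
    (hSUB : ¬ StructBalanced head tail σ)
    (htree : HasSpanningTree head tail) :
    ((Ls head tail σ).rank = (Les head tail σ).rank ↔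
      ((∃ S, IsRootedSCC head tail S ∧ ¬ SCCBalanced head tail σ S) ∨
        ∃ i, IsRootNode tail i)) ∧
    ((∃ S, IsRootedSCC head tail S ∧ ¬ SCCBalanced head tail σ S) →
      (Ls head tail σ).rank = N ∧ (Les head tail σ).rank = N) ∧
    ((∃ i, IsRootNode tail i) →
      (Ls head tail σ).rank = N - 1 ∧ (Les head tail σ).rank = N - 1) :=
  rank_laplacians_SUB_spanning_tree_general hht hσ hSUB htree
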